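/- The function g has π/3 as its unique zero in the open interval (0, π/2); moreover g(θ) > 0 for all θ ∈ (0, π/3) and g(θ) < 0 for all θ ∈ (π/3, π/2). -/

import Mathlib

open Real

noncomputable def g (θ : ℝ) : ℝ :=
  Real.sqrt 3 / 2 + Real.cos (θ / 2) / (2 * Real.sin (θ / 2)) - 2 * Real.cos (θ / 2)

/-! Over the common denominator `sin (θ / 2)`, the numerator of `g θ` is
`sin (θ / 2 + π / 6) - sin θ`. The sum-to-product formula factors it: one factor vanishes
where the two angles agree, at `θ = π / 3`, and the other stays positive until the angles become
supplementary, at `θ = 5 * π / 9`. -/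

theorem sign_sin_of_mem_Ioo {x : ℝ} (hx : x ∈ Set.Ioo (-π) π) :
    SignType.sign (sin x) = SignType.sign x := by
  rcases lt_trichotomy x 0 with hneg | rfl | hpos
  · rw [sign_neg hneg, sign_neg (sin_neg_of_neg_of_neg_pi_lt hneg hx.1)]
  · rw [sin_zero]
  · rw [sign_pos hpos, sign_pos (sin_pos_of_pos_of_lt_pi hpos hx.2)]

theorem g_eq_sin_sub_sin_div {θ : ℝ} (hθ : sin (θ / 2) ≠ 0) :
    g θ = (sin (θ / 2 + π / 6) - sin θ) / sin (θ / 2) := by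
  have sin_eq : sin θ = 2 * sin (θ / 2) * cos (θ / 2) := by
    rw [← sin_two_mul, mul_div_cancel₀ θ two_ne_zero]
  rw [g, sin_eq, sin_add, cos_pi_div_six, sin_pi_div_six]
  field_simp

theorem g_eq_mul_sin {θ : ℝ} (hθ : sin (θ / 2) ≠ 0) :
    g θ = 2 * cos (3 * θ / 4 + π / 12) / sin (θ / 2) * sin ((π / 3 - θ) / 4) := by
  have half_diff : (θ / 2 + π / 6 - θ) / 2 = (π / 3 - θ) / 4 := by ring
  have half_sum : (θ / 2 + π / 6 + θ) / 2 = 3 * θ / 4 + π / 12 := by ring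
  rw [g_eq_sin_sub_sin_div hθ, sin_sub_sin, half_diff, half_sum]
  ring

theorem sign_g {θ : ℝ} (hθ : θ ∈ Set.Ioo 0 (5 * π / 9)) :
    SignType.sign (g θ) = SignType.sign (π / 3 - θ) := by
  obtain ⟨hθ_pos, hθ_lt⟩ := hθ
  have hsin : 0 < sin (θ / 2) := sin_pos_of_pos_of_lt_pi (by linarith) (by linarith)
  have hcos : 0 < cos (3 * θ / 4 + π / 12) := cos_pos_of_mem_Ioo ⟨by linarith, by linarith⟩
  have hfactor : 0 < 2 * cos (3 * θ / 4 + π / 12) / sin (θ / 2) := by positivity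
  calc SignType.sign (g θ)
      = SignType.sign (sin ((π / 3 - θ) / 4)) := by
        rw [g_eq_mul_sin hsin.ne', sign_mul, sign_pos hfactor, one_mul]
    _ = SignType.sign ((π / 3 - θ) / 4) := sign_sin_of_mem_Ioo ⟨by linarith, by linarith⟩
    _ = SignType.sign (π / 3 - θ) := by
        rw [div_eq_mul_inv, sign_mul, sign_pos (by norm_num : (0 : ℝ) < 4⁻¹), mul_one]

theorem stmt_13_general :
    g (π / 3) = 0 ∧
    (∀ θ ∈ Set.Ioo 0 (5 * π / 9), g θ = 0 → θ = π / 3) ∧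
    (∀ θ ∈ Set.Ioo 0 (π / 3), 0 < g θ) ∧
    (∀ θ ∈ Set.Ioo (π / 3) (5 * π / 9), g θ < 0) := by
  have hπ := pi_pos
  refine ⟨?_, fun θ hθ hg ↦ ?_, fun θ hθ ↦ ?_, fun θ hθ ↦ ?_⟩
  · rw [← _root_.sign_eq_zero_iff, sign_g ⟨by linarith, by linarith⟩, sub_self, _root_.sign_zero]
  · rw [← _root_.sign_eq_zero_iff, sign_g hθ, _root_.sign_eq_zero_iff] at hg
    exact (sub_eq_zero.1 hg).symm
  · rw [← sign_eq_one_iff, sign_g ⟨hθ.1, by linarith [hθ.2]⟩]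
    exact sign_pos (sub_pos.2 hθ.2)
  · rw [← sign_eq_neg_one_iff, sign_g ⟨by linarith [hθ.1], hθ.2⟩]
    exact sign_neg (sub_neg.2 hθ.1)

theorem stmt_13 :
    g (π / 3) = 0 ∧
    (∀ θ ∈ Set.Ioo 0 (π / 2), g θ = 0 → θ = π / 3) ∧
    (∀ θ ∈ Set.Ioo 0 (π / 3), 0 < g θ) ∧
    (∀ θ ∈ Set.Ioo (π / 3) (π / 2), g θ < 0) := by
  have ⟨zero, unique, pos, neg⟩ := stmt_13_general
  have h : π / 2 ≤ 5 * π / 9 := by linarith [pi_pos]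
  exact ⟨zero, fun θ hθ ↦ unique θ ⟨hθ.1, hθ.2.trans_le h⟩, pos,
    fun θ hθ ↦ neg θ ⟨hθ.1, hθ.2.trans_le h⟩⟩
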